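/- Let G = (V ∪ {s}, E) be a finite sandpile graph and W ⊆ V with the induced subgraph of G on (V ∪ {s}) \ W connected. Then every configuration ξ ∈ R_{G_W} that is minimal in G_W has the same total number of particles, namely Σ_{w ∈ W} ξ(w) equals the number of edges of G_W minus the degree of s in G_W; equivalently, Σ_{w ∈ W} ξ(w) = (1/2) Σ_{x,y ∈ W} b_{xy}, the number of edges of G with both endpoints in W. -/

import Mathlib

open scoped Classical

namespace Sandpile

/-- A finite sandpile multigraph on vertex set `α` (which plays the role of `V ∪ {s}`),
given by a distinguished sink and symmetric edge multiplicities. -/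
structure Graph (α : Type*) where
  sink : α
  b : α → α → ℕ

namespace Graph

variable {α : Type*} [Fintype α] [DecidableEq α] (G : Graph α)

/-- The non-sink vertices (the set `V`). -/
def VSet : Finset α := Finset.univ.erase G.sink

/-- Degree restricted to a finite set of vertices: `deg_F(x) = ∑_{y ∈ F} b_{xy}`. -/
def degIn (F : Finset α) (x : α) : ℕ := ∑ y ∈ F, G.b x y

/-- Total degree `deg_G(x)`. -/
def deg (x : α) : ℕ := ∑ y, G.b x y

/-- `G` is a genuine finite sandpile graph: symmetric multiplicities, no loops, connected. -/
def IsSandpileGraph : Prop :=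
  (∀ x y, G.b x y = G.b y x) ∧ (∀ x, G.b x x = 0) ∧
    ∀ x y : α, Relation.ReflTransGen (fun u v => 0 < G.b u v) x y

/-- Connectivity of the subgraph induced on the vertex set `S`. -/
def ConnectedOn (S : Set α) : Prop :=
  ∀ x ∈ S, ∀ y ∈ S,
    Relation.ReflTransGen (fun u v => u ∈ S ∧ v ∈ S ∧ 0 < G.b u v) x y

/-- A sandpile is stable if every non-sink vertex carries fewer particles than its degree. -/
def Stable (η : α → ℕ) : Prop := ∀ x ∈ G.VSet, η x < G.deg x

/-- `η` is ample for `F` if some vertex of `F` has at least `deg_F` particles. -/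
def AmpleFor (η : α → ℕ) (F : Finset α) : Prop := ∃ x ∈ F, G.degIn F x ≤ η x

/-- Dhar's burning test: recurrent = stable and ample for every nonempty `F ⊆ V`. -/
def Recurrent (η : α → ℕ) : Prop :=
  G.Stable η ∧ ∀ F ⊆ G.VSet, F.Nonempty → G.AmpleFor η F

/-- Remove one particle at `w` (`η - δ_w`). -/
def SubOne (η : α → ℕ) (w : α) : α → ℕ := fun x => if x = w then η x - 1 else η x

/-- `η` and `ξ` agree on `W` (restriction `η_W = ξ_W`). -/
def EqOn (η ξ : α → ℕ) (W : Finset α) : Prop := ∀ x ∈ W, η x = ξ x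

/-- `ξ` is (generalized) minimal on `W`: it extends to a recurrent sandpile, and no
recurrent extension stays recurrent after removing a particle from a vertex of `W`.
(`η - δ_w ∉ R_G` holds automatically if `η w = 0`, as then `η - δ_w` is not a configuration.) -/
def Minimal (W : Finset α) (ξ : α → ℕ) : Prop :=
  (∃ η, G.Recurrent η ∧ EqOn η ξ W) ∧
    ∀ η, G.Recurrent η → EqOn η ξ W → ∀ w ∈ W, ¬(1 ≤ η w ∧ G.Recurrent (SubOne η w))

/-- `ν_G[P]`: the uniform probability of the event `P` under the uniform measure on
recurrent configurations (configurations are normalized to vanish at the sink). -/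
noncomputable def prob (P : (α → ℕ) → Prop) : ℝ :=
  (Nat.card {η : α → ℕ // η G.sink = 0 ∧ G.Recurrent η ∧ P η} : ℝ) /
    (Nat.card {η : α → ℕ // η G.sink = 0 ∧ G.Recurrent η} : ℝ)

/-- The graph Laplacian with the sink row and column deleted. -/
noncomputable def lapRed :
    Matrix {x : α // x ≠ G.sink} {x : α // x ≠ G.sink} ℝ :=
  Matrix.of fun x y =>
    if (x : α) = (y : α) then (G.deg ↑x : ℝ) else -(G.b ↑x ↑y : ℝ)

/-- `H = (Δ')⁻¹`, extended by `0` on the sink. -/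
noncomputable def Hfun (x y : α) : ℝ :=
  if hx : x = G.sink then 0
  else if hy : y = G.sink then 0
  else (G.lapRed)⁻¹ ⟨x, hx⟩ ⟨y, hy⟩

/-- Oriented edges of the multigraph `G`: an edge from `p.1` to `p.2.1`, with copy
index `p.2.2` (parallel edges are distinct). -/
abbrev OEdge (G : Graph α) : Type _ := {p : α × α × ℕ // p.2.2 < G.b p.1 p.2.1}

/-- `K_G(e,f) = δ_{ef} - Y_G(e,f)` where `Y_G` is the transfer current matrix. -/
noncomputable def Kmat (e f : G.OEdge) : ℝ :=
  (if e = f then 1 else 0) -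
    (G.Hfun e.1.1 f.1.1 - G.Hfun e.1.1 f.1.2.1 - G.Hfun e.1.2.1 f.1.1 +
      G.Hfun e.1.2.1 f.1.2.1)

/-- Unburnt sets of phase one of the burning algorithm based on `Q`:
`U_0 = V`, `U_i = U_{i-1} \ B_i` with `B_i = {x ∈ U_{i-1} \ Q : η x ≥ deg_{U_{i-1}} x}`. -/
def U1 (η : α → ℕ) (Q : Finset α) : ℕ → Finset α
  | 0 => G.VSet
  | i + 1 => (U1 η Q i).filter fun x => x ∈ Q ∨ η x < G.degIn (U1 η Q i) x

/-- The final unburnt set `U^{(1)}_I` of phase one (the sequence `U1` is decreasing,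
hence stabilizes after at most `|α|` steps). -/
def U1lim (η : α → ℕ) (Q : Finset α) : Finset α := G.U1 η Q (Fintype.card α)

/-- Unburnt sets of phase two of the burning algorithm based on `Q`. -/
def U2 (η : α → ℕ) (Q : Finset α) : ℕ → Finset α
  | 0 => G.U1lim η Q
  | i + 1 => (U2 η Q i).filter fun x => η x < G.degIn (U2 η Q i) x

/-- Recurrence in the wired graph `G_W` (note `deg_{G_W}(x) = deg_G(x)` for `x ∈ W`,
and `deg_F` for `F ⊆ W` is the same in `G_W` and `G`). -/
def WiredRecurrent (W : Finset α) (ξ : α → ℕ) : Prop :=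
  (∀ x ∈ W, ξ x < G.deg x) ∧ ∀ F ⊆ W, F.Nonempty → ∃ x ∈ F, G.degIn F x ≤ ξ x

/-- `ξ` is minimal in the wired graph `G_W`. -/
def WiredMinimal (W : Finset α) (ξ : α → ℕ) : Prop :=
  G.WiredRecurrent W ξ ∧ ∀ w ∈ W, ¬(1 ≤ ξ w ∧ G.WiredRecurrent W (SubOne ξ w))

/-- Entry points `E(ξ,W)` of `ξ ∈ R_{G_W}`: vertices burnable at the first step. -/
def entryPoints (W : Finset α) (ξ : α → ℕ) : Finset α :=
  W.filter fun w => G.degIn W w ≤ ξ w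

/-- `x` is burnable given the burnt set `S`: `η(x) ≥ deg_G(x) − ∑_{y ∈ S} b_{xy}`. -/
def Burnable (η : α → ℕ) (S : Finset α) (x : α) : Prop :=
  G.degIn (Finset.univ \ S) x ≤ η x

/-- A burning sequence starting from the burnt set `S`. -/
def IsBurnSeq (η : α → ℕ) : Finset α → List α → Prop
  | _, [] => True
  | S, x :: l => x ∉ S ∧ G.Burnable η S x ∧ IsBurnSeq η (insert x S) l

/-- `B` is a burnt set for `η`: some burning sequence from `{s}` burns exactly `B`. -/
def IsBurntSet (η : α → ℕ) (B : Finset α) : Prop :=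
  ∃ l : List α, G.IsBurnSeq η {G.sink} l ∧ l.toFinset = B

/-- Reachability within the vertex set `S`. -/
def ReachIn (S : Set α) (x y : α) : Prop :=
  Relation.ReflTransGen (fun u v => u ∈ S ∧ v ∈ S ∧ 0 < G.b u v) x y

/-- `C` is a connected component of the subgraph induced on `(V ∪ {s}) \ W`
that does not contain the sink. -/
def IsHoleComp (W C : Finset α) : Prop :=
  C.Nonempty ∧ G.sink ∉ C ∧
    ∀ x ∈ C, ∀ y : α, y ∈ C ↔ y ∉ W ∧ G.ReachIn {a : α | a ∉ W} x y

/-- Adjacency induced by a finite set `t` of (undirected, indexed) edges. -/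
def edgeRel (t : Finset (Sym2 α × ℕ)) (u v : α) : Prop := ∃ k : ℕ, (s(u, v), k) ∈ t

/-- `t` is a spanning tree of the multigraph `G`: it consists of edges of `G`
(parallel edges distinct), it spans (connected), and every edge is a bridge
(equivalently, it is acyclic). -/
def IsSpanningTree (t : Finset (Sym2 α × ℕ)) : Prop :=
  (∀ p ∈ t, ∃ x y : α, p.1 = s(x, y) ∧ p.2 < G.b x y) ∧
  (∀ u v : α, Relation.ReflTransGen (edgeRel t) u v) ∧
  ∀ p ∈ t, ∀ x y : α, p.1 = s(x, y) →
    ¬ Relation.ReflTransGen (edgeRel (t.erase p)) x y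

/-- Adjacency induced by a set of (undirected, indexed) edges. -/
def edgeRelSet (t : Set (Sym2 α × ℕ)) (u v : α) : Prop := ∃ k : ℕ, (s(u, v), k) ∈ t

/-- Set version of `IsSpanningTree`. -/
def IsSpanningTreeSet (t : Set (Sym2 α × ℕ)) : Prop :=
  (∀ p ∈ t, ∃ x y : α, p.1 = s(x, y) ∧ p.2 < G.b x y) ∧
  (∀ u v : α, Relation.ReflTransGen (edgeRelSet t) u v) ∧
  ∀ p ∈ t, ∀ x y : α, p.1 = s(x, y) →
    ¬ Relation.ReflTransGen (edgeRelSet (t \ {p})) x y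

/-- The step at which `x` burns in phase one (0 for the sink; `sInf ∅ = 0` if `x`
never burns in phase one). -/
noncomputable def p1time (η : α → ℕ) (Q : Finset α) (x : α) : ℕ :=
  sInf {i : ℕ | x ∉ G.U1 η Q i}

/-- The step at which `x` burns in phase two. -/
noncomputable def p2time (η : α → ℕ) (Q : Finset α) (x : α) : ℕ :=
  sInf {i : ℕ | x ∉ G.U2 η Q i}

/-- Vertices burnt at step `i` of phase one (`B^{(1)}_0 = {s}`). -/
def B1 (η : α → ℕ) (Q : Finset α) : ℕ → Finset α
  | 0 => {G.sink}
  | i + 1 => G.U1 η Q i \ G.U1 η Q (i + 1)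

/-- Vertices burnt at step `i` of phase two (`B^{(2)}_0` = everything burnt in phase
one, including the sink). -/
def B2 (η : α → ℕ) (Q : Finset α) : ℕ → Finset α
  | 0 => Finset.univ \ G.U1lim η Q
  | i + 1 => G.U2 η Q i \ G.U2 η Q (i + 1)

/-- The set `B^{(p)}_{i-1}` of vertices burnt at the step preceding the step at which
`x` burns (in the appropriate phase). -/
noncomputable def prevBurnt (η : α → ℕ) (Q : Finset α) (x : α) : Finset α :=
  if x ∈ G.U1lim η Q then G.B2 η Q (G.p2time η Q x - 1)
  else G.B1 η Q (G.p1time η Q x - 1)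

/-- The set `D = B^{(p)}_0 ∪ ⋯ ∪ B^{(p)}_{i-1}` of vertices burnt strictly before `x`
in the phase in which `x` burns. -/
noncomputable def burntBefore (η : α → ℕ) (Q : Finset α) (x : α) : Finset α :=
  if x ∈ G.U1lim η Q then Finset.univ \ G.U2 η Q (G.p2time η Q x - 1)
  else Finset.univ \ G.U1 η Q (G.p1time η Q x - 1)

/-- `j = η(x) − deg_G(x) + n_x` with `n_x = ∑_{y ∈ D} b_{xy}`. -/
noncomputable def jX (η : α → ℕ) (Q : Finset α) (x : α) : ℕ :=
  η x + G.degIn (G.burntBefore η Q x) x - G.deg x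

/-- The defining property of the edge `e_x` of the burning bijection based on `Q`:
`e_x` has tail `x`, head burnt at the previous step, and exactly `j` smaller elements
of `P_x` under the given edge order `lt x`. -/
def EdgeSpec (lt : α → G.OEdge → G.OEdge → Prop) (η : α → ℕ) (Q : Finset α)
    (x : α) (e : G.OEdge) : Prop :=
  e.1.1 = x ∧ e.1.2.1 ∈ G.prevBurnt η Q x ∧
    {f : G.OEdge | f.1.1 = x ∧ f.1.2.1 ∈ G.prevBurnt η Q x ∧ lt x f e}.ncard =
      G.jX η Q x

/-- The (oriented) spanning tree `t(η) = {e_x : x ∈ V}` assigned to `η` by the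
burning bijection based on `Q`. -/
def treeOf (lt : α → G.OEdge → G.OEdge → Prop) (η : α → ℕ) (Q : Finset α) :
    Set G.OEdge :=
  {e | ∃ x ∈ G.VSet, G.EdgeSpec lt η Q x e}

/-- Forget the orientation of an oriented edge. -/
def undir (e : G.OEdge) : Sym2 α × ℕ := (s(e.1.1, e.1.2.1), e.1.2.2)

/-- Total burning order: phase-one vertices first (at their phase-one step), then
phase-two vertices. -/
noncomputable def burnOrder (η : α → ℕ) (Q : Finset α) (x : α) : ℕ :=
  if x ∈ G.U1lim η Q then Fintype.card α + 1 + G.p2time η Q x else G.p1time η Q x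

/-- Edge multiplicities of the auxiliary graph `G_W^*` (on vertex set `W ∪ {s}`):
`b*_{xy} = b_{xy}` for `x,y ∈ W`; `b*_{xs} = ∑_{z ∉ W} b_{xz}` for `x ∈ Q` and
`b*_{xs} = 0` for `x ∈ W \ Q`. -/
def bstar (Q W : Finset α) (x y : α) : ℕ :=
  if x ∈ W ∧ y ∈ W then G.b x y
  else if x ∈ W ∧ y = G.sink then
    if x ∈ Q then ∑ z ∈ Finset.univ \ W, G.b x z else 0
  else if y ∈ W ∧ x = G.sink then
    if y ∈ Q then ∑ z ∈ Finset.univ \ W, G.b z y else 0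
  else 0

/-- Recurrence in the auxiliary graph `G_W^*`. -/
def StarRecurrent (Q W : Finset α) (ζ : α → ℕ) : Prop :=
  (∀ x ∈ W, ζ x < ∑ y ∈ insert G.sink W, G.bstar Q W x y) ∧
    ∀ F ⊆ W, F.Nonempty → ∃ x ∈ F, (∑ y ∈ F, G.bstar Q W x y) ≤ ζ x

end Graph

end Sandpile

open Sandpile

/-!
Run Dhar's burning test on a minimal configuration `ξ`. Ampleness for `W` yields a
vertex `x ∈ W` with at least `deg_W(x)` particles. Such an `x` keeps every `F ⊆ W` containing it
ample, so minimality forces `ξ(x) = deg_W(x)` exactly, and `ξ` is again minimal on `W \ {x}`.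
Removing `x` thus takes away as many particles as edges within `W`, and one inducts on `W`.
-/

namespace Sandpile.Graph

variable {α : Type*} {G : Graph α} {W W' F : Finset α} {η ζ ξ : α → ℕ}

/-- The burning test on `W`: `η` is ample for every nonempty `F ⊆ W`. It is recurrence in the
wired graph `G_W` with the stability requirement removed. -/
def AmpleOn (G : Graph α) (W : Finset α) (η : α → ℕ) : Prop :=
  ∀ F ⊆ W, F.Nonempty → G.AmpleFor η F

/-- `ξ` passes the burning test on `W`, but fails it after the removal of any single particle
from `W`. The condition `1 ≤ ξ w` is there because `SubOne` truncates at zero. -/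
def IsMinimalAmpleOn [DecidableEq α] (G : Graph α) (W : Finset α) (ξ : α → ℕ) : Prop :=
  G.AmpleOn W ξ ∧ ∀ w ∈ W, ¬(1 ≤ ξ w ∧ G.AmpleOn W (SubOne ξ w))

theorem degIn_mono (hF : F ⊆ W) (x : α) : G.degIn F x ≤ G.degIn W x :=
  Finset.sum_le_sum_of_subset hF

theorem degIn_erase_add [DecidableEq α] {x : α} (hx : x ∈ W) (y : α) :
    G.degIn (W.erase x) y + G.b y x = G.degIn W y :=
  Finset.sum_erase_add W (G.b y) hx

theorem sum_degIn_eq_sum_erase_add [DecidableEq α] (hsymm : ∀ x y, G.b x y = G.b y x)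
    (hloop : ∀ x, G.b x x = 0) {x : α} (hx : x ∈ W) :
    ∑ y ∈ W, G.degIn W y = ∑ y ∈ W.erase x, G.degIn (W.erase x) y + 2 * G.degIn W x := by
  have edges_at_x : ∑ y ∈ W.erase x, G.b y x = G.degIn W x := by
    rw [← degIn_erase_add hx x, hloop, add_zero]
    exact Finset.sum_congr rfl fun y _ => hsymm y x
  calc ∑ y ∈ W, G.degIn W y
      = ∑ y ∈ W.erase x, G.degIn W y + G.degIn W x := (Finset.sum_erase_add W _ hx).symm
    _ = ∑ y ∈ W.erase x, G.degIn (W.erase x) y + ∑ y ∈ W.erase x, G.b y x + G.degIn W x := by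
        simp only [← degIn_erase_add hx, Finset.sum_add_distrib]
    _ = ∑ y ∈ W.erase x, G.degIn (W.erase x) y + 2 * G.degIn W x := by
        rw [edges_at_x, add_assoc, two_mul]

section SubOne

variable [DecidableEq α]

theorem subOne_self (ξ : α → ℕ) (w : α) : SubOne ξ w w = ξ w - 1 :=
  if_pos rfl

theorem subOne_of_ne {w x : α} (h : x ≠ w) : SubOne ξ w x = ξ x :=
  if_neg h

theorem subOne_le (ξ : α → ℕ) (w x : α) : SubOne ξ w x ≤ ξ x := by
  obtain rfl | hne := eq_or_ne x w
  · exact (subOne_self ξ x).trans_le (Nat.sub_le _ _)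
  · exact (subOne_of_ne hne).le

end SubOne

namespace AmpleOn

theorem mono (h : G.AmpleOn W η) (hle : ∀ x ∈ W, η x ≤ ζ x) : G.AmpleOn W ζ := by
  intro F hF hne
  obtain ⟨x, hxF, hx⟩ := h F hF hne
  exact ⟨x, hxF, hx.trans (hle x (hF hxF))⟩

theorem subset (h : G.AmpleOn W η) (hW : W' ⊆ W) : G.AmpleOn W' η :=
  fun F hF => h F (hF.trans hW)

theorem of_erase [DecidableEq α] {x : α} (h : G.AmpleOn (W.erase x) η)
    (hx : G.degIn W x ≤ η x) : G.AmpleOn W η := by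
  intro F hF hne
  by_cases hxF : x ∈ F
  · exact ⟨x, hxF, (degIn_mono hF x).trans hx⟩
  · exact h F (Finset.subset_erase.mpr ⟨hF, hxF⟩) hne

end AmpleOn

namespace IsMinimalAmpleOn

variable [DecidableEq α] {x : α}

theorem eq_degIn (h : G.IsMinimalAmpleOn W ξ) (hxW : x ∈ W) (hx : G.degIn W x ≤ ξ x) :
    ξ x = G.degIn W x := by
  by_contra hne
  have hlt : G.degIn W x < ξ x := lt_of_le_of_ne hx (Ne.symm hne)
  have ample_erase : G.AmpleOn (W.erase x) (SubOne ξ x) :=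
    (h.1.subset (W.erase_subset x)).mono fun y hy =>
      (subOne_of_ne (Finset.ne_of_mem_erase hy)).ge
  have burns_first : G.degIn W x ≤ SubOne ξ x x := by
    rw [subOne_self]
    exact Nat.le_sub_one_of_lt hlt
  exact h.2 x hxW ⟨Nat.one_le_of_lt hlt, ample_erase.of_erase burns_first⟩

theorem erase (h : G.IsMinimalAmpleOn W ξ) (hx : G.degIn W x ≤ ξ x) :
    G.IsMinimalAmpleOn (W.erase x) ξ := by
  refine ⟨h.1.subset (W.erase_subset x), fun w hw ⟨hpos, hample⟩ => ?_⟩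
  obtain ⟨hwx, hwW⟩ := Finset.mem_erase.mp hw
  have burns_first : G.degIn W x ≤ SubOne ξ w x := by rwa [subOne_of_ne hwx.symm]
  exact h.2 w hwW ⟨hpos, hample.of_erase burns_first⟩

theorem two_mul_sum_eq_sum_degIn (hsymm : ∀ x y, G.b x y = G.b y x)
    (hloop : ∀ x, G.b x x = 0) (h : G.IsMinimalAmpleOn W ξ) :
    2 * ∑ w ∈ W, ξ w = ∑ x ∈ W, G.degIn W x := by
  induction W using Finset.strongInduction with
  | H W ih =>
    obtain rfl | hne := W.eq_empty_or_nonempty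
    · rfl
    obtain ⟨x, hxW, hx⟩ := h.1 W subset_rfl hne
    calc 2 * ∑ w ∈ W, ξ w
        = 2 * ∑ w ∈ W.erase x, ξ w + 2 * ξ x := by
          rw [← Finset.sum_erase_add W ξ hxW, mul_add]
      _ = ∑ y ∈ W.erase x, G.degIn (W.erase x) y + 2 * G.degIn W x := by
          rw [ih _ (Finset.erase_ssubset hxW) (h.erase hx), h.eq_degIn hxW hx]
      _ = ∑ y ∈ W, G.degIn W y := (sum_degIn_eq_sum_erase_add hsymm hloop hxW).symm

end IsMinimalAmpleOn

theorem WiredMinimal.isMinimalAmpleOn [Fintype α] [DecidableEq α] (h : G.WiredMinimal W ξ) :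
    G.IsMinimalAmpleOn W ξ := by
  obtain ⟨⟨hstable, hample⟩, hmin⟩ := h
  have stable_subOne (w : α) : ∀ x ∈ W, SubOne ξ w x < G.deg x :=
    fun x hx => (subOne_le ξ w x).trans_lt (hstable x hx)
  exact ⟨hample, fun w hw ⟨hpos, hample'⟩ => hmin w hw ⟨hpos, stable_subOne w, hample'⟩⟩

end Sandpile.Graph

theorem statement_12_general {α : Type*} [Fintype α] [DecidableEq α] {G : Sandpile.Graph α}
    (hsymm : ∀ x y, G.b x y = G.b y x) (hloop : ∀ x, G.b x x = 0) {W : Finset α} {ξ : α → ℕ}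
    (hξ : G.WiredMinimal W ξ) :
    2 * ∑ w ∈ W, ξ w = ∑ x ∈ W, ∑ y ∈ W, G.b x y :=
  hξ.isMinimalAmpleOn.two_mul_sum_eq_sum_degIn hsymm hloop

/-- All minimal configurations on `W` have the same number of
particles: twice the total equals `∑_{x,y ∈ W} b_{xy}`, i.e. the total is the number
of edges of `G_W` minus the degree of the sink in `G_W` (the number of edges of `G`
with both endpoints in `W`). -/
theorem statement_12 {α : Type*} [Fintype α] [DecidableEq α] (G : Sandpile.Graph α)
    (hG : G.IsSandpileGraph) (W : Finset α) (hWs : G.sink ∉ W)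
    (hconn : G.ConnectedOn {x : α | x ∉ W}) :
    ∀ ξ : α → ℕ, G.WiredMinimal W ξ →
      2 * ∑ w ∈ W, ξ w = ∑ x ∈ W, ∑ y ∈ W, G.b x y :=
  fun _ hξ => statement_12_general hG.1 hG.2.1 hξ
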